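/- arXiv:2512.01838 — 3 statements merged into one kernel-verified Lean document; each statement's English description precedes it below -/
import Mathlib

section
/- Moment bound for oscillatory Mellin integrals: Let c ∈ ℝ, k > 0, let g be a Lebesgue probability density on (0,∞) with ‖g‖_{L^∞(x^{2c−1})} = ess sup_{x>0} g(x) x^{2c−1} < ∞, let Y be a random variable with density g, and let h : ℝ → ℂ satisfy 1_{[−k,k]} h ∈ L²(ℝ). Then E[ |∫_{−k}^{k} Y^{c−1+2πit} h(t) dt|² ] ≤ ‖g‖_{L^∞(x^{2c−1})} ∫_{−k}^{k} |h(t)|² dt. -/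
open MeasureTheory Set Filter
open scoped ENNReal

noncomputable section

namespace MultErr

/-- The complex power `x ↦ x^(c-1+2πit)`. -/
def cpw (c t x : ℝ) : ℂ := (x : ℂ) ^ ((c : ℂ) - 1 + 2 * Real.pi * Complex.I * (t : ℂ))

/-- The Mellin transform `M_c[g](t) = ∫₀^∞ x^(c-1+2πit) g(x) dx` of a real-valued `g`. -/
def mellinT (c : ℝ) (g : ℝ → ℝ) (t : ℝ) : ℂ := ∫ x in Ioi (0 : ℝ), cpw c t x * (g x : ℂ)

/-- The multiplicative convolution `(f*g)(y) = ∫₀^∞ f(x) g(y/x) x⁻¹ dx`. -/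
def mconv (f g : ℝ → ℝ) (y : ℝ) : ℝ := ∫ x in Ioi (0 : ℝ), f x * g (y / x) / x

/-- The weighted `L¹`-norm `‖h‖_{L¹(xᵃ)} = ∫₀^∞ |h(x)| xᵃ dx`. -/
def wnorm1 (a : ℝ) (h : ℝ → ℝ) : ℝ := ∫ x in Ioi (0 : ℝ), |h x| * x ^ a

/-- Membership in `L¹((0,∞), xᵃ dx)`. -/
def MemW1 (a : ℝ) (h : ℝ → ℝ) : Prop := IntegrableOn (fun x => |h x| * x ^ a) (Ioi 0)

/-- Membership in `L²((0,∞), xᵃ dx)`. -/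
def MemW2 (a : ℝ) (h : ℝ → ℝ) : Prop := IntegrableOn (fun x => h x ^ 2 * x ^ a) (Ioi 0)

/-- The weighted `L^∞`-norm `ess sup_{x>0} |h(x)| xᵃ`, valued in `ℝ≥0∞`. -/
def wnormInf (a : ℝ) (h : ℝ → ℝ) : ℝ≥0∞ :=
  essSup (fun x => ENNReal.ofReal (|h x| * x ^ a)) (volume.restrict (Ioi 0))

/-- Real-valued weighted `L^∞`-norm. -/
def wnormInfR (a : ℝ) (h : ℝ → ℝ) : ℝ := (wnormInf a h).toReal

/-- A Lebesgue probability density on `(0,∞)`. -/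
def IsDensity (h : ℝ → ℝ) : Prop :=
  (∀ x, 0 ≤ h x) ∧ (∀ x ≤ (0 : ℝ), h x = 0) ∧ IntegrableOn h (Ioi 0) ∧
    (∫ x in Ioi (0 : ℝ), h x) = 1

/-- The class `𝔻`: densities on `(0,∞)` lying in `L¹(x^(c-1)) ∩ L²(x^(2c-1))`. -/
def regD (c : ℝ) (h : ℝ → ℝ) : Prop := IsDensity h ∧ MemW1 (c - 1) h ∧ MemW2 (2 * c - 1) h

/-- A measurable symmetric probability density on `ℝ`. -/
def IsSymmDensity (w : ℝ → ℝ) : Prop :=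
  Measurable w ∧ (∀ t, 0 ≤ w t) ∧ (∀ t, w (-t) = w t) ∧ Integrable w ∧ (∫ t : ℝ, w t) = 1

/-- `ess sup_t 1_{[-k,k]}(t) w(t)/|M_c[φ](t)|`, valued in `ℝ≥0∞`. -/
def winf (c k : ℝ) (w φ : ℝ → ℝ) : ℝ≥0∞ :=
  essSup (fun t => ENNReal.ofReal ((Icc (-k) k).indicator
    (fun t => w t / ‖mellinT c φ t‖) t)) volume

/-- `L_γ = 1 - log γ`. -/
def Lq (γ : ℝ) : ℝ := 1 - Real.log γ

/-- `Δ₄(k) = ∫_{-k}^k w⁴(t)/|M_c[φ](t)|⁴ dt`. -/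
def Δ4 (c k : ℝ) (w φ : ℝ → ℝ) : ℝ :=
  ∫ t in Icc (-k) k, w t ^ 4 / ‖mellinT c φ t‖ ^ 4

/-- `Δ∞(k) = ‖1_{[-k,k]} w/M_c[φ]‖_∞⁴`. -/
def Δinf (c k : ℝ) (w φ : ℝ → ℝ) : ℝ := (winf c k w φ).toReal ^ 4

/-- `c_φ = (‖φ‖_{L^∞(x^{2c-1})}/‖φ‖_{L¹(x^{2(c-1)})}) ∨ 1`. -/
def cphi (c : ℝ) (φ : ℝ → ℝ) : ℝ := max (wnormInfR (2 * c - 1) φ / wnorm1 (2 * (c - 1)) φ) 1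

/-- `V_{h|φ} = ‖h*φ‖_{L¹(x^{2(c-1)})} ∨ 1`. -/
def Vc (c : ℝ) (h φ : ℝ → ℝ) : ℝ := max (wnorm1 (2 * (c - 1)) (mconv h φ)) 1

/-- `V⁽²⁾_{h|φ} = ‖h*φ‖_{L¹(x^{4(c-1)})} ∨ 1`. -/
def V2c (c : ℝ) (h φ : ℝ → ℝ) : ℝ := max (wnorm1 (4 * (c - 1)) (mconv h φ)) 1

/-- `V_{h|φ}(p) = ‖h*φ‖_{L¹(x^{2p(c-1)})} ∨ 1`. -/
def Vpc (c p : ℝ) (h φ : ℝ → ℝ) : ℝ := max (wnorm1 (2 * p * (c - 1)) (mconv h φ)) 1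

/-- `q_k²(h) = ∫_{-k}^k |M_c[h](t)|² w²(t) dt`. -/
def qk2 (c k : ℝ) (w h : ℝ → ℝ) : ℝ :=
  ∫ t in Icc (-k) k, ‖mellinT c h t‖ ^ 2 * w t ^ 2

/-- `q²(h) = ∫_ℝ |M_c[h](t)|² w²(t) dt`. -/
def q2 (c : ℝ) (w h : ℝ → ℝ) : ℝ :=
  ∫ t : ℝ, ‖mellinT c h t‖ ^ 2 * w t ^ 2

/-- The weight `w²(t)/|M_c[φ](t)|²`. -/
def wgt (c : ℝ) (w φ : ℝ → ℝ) (t : ℝ) : ℝ := w t ^ 2 / ‖mellinT c φ t‖ ^ 2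

variable {Ω : Type*} [MeasurableSpace Ω]

/-- The U-part `T̂_k` of the test statistic. -/
def That (c k : ℝ) (w φ : ℝ → ℝ) {n : ℕ} (Y : Fin n → Ω → ℝ) (ω : Ω) : ℂ :=
  ((n : ℂ) * ((n : ℂ) - 1))⁻¹ *
    ∑ j : Fin n, ∑ l : Fin n,
      if j ≠ l then
        ∫ t in Icc (-k) k, cpw c t (Y j ω) * cpw c (-t) (Y l ω) * (wgt c w φ t : ℂ)
      else 0

/-- The linear part `Ŝ_k` of the test statistic. -/
def Shat (c k : ℝ) (w φ f₀ : ℝ → ℝ) {n : ℕ} (Y : Fin n → Ω → ℝ) (ω : Ω) : ℂ :=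
  (n : ℂ)⁻¹ * ∑ j : Fin n,
    ∫ t in Icc (-k) k,
      cpw c t (Y j ω) * (starRingEnd ℂ) (mellinT c (mconv f₀ φ) t) * (wgt c w φ t : ℂ)

/-- The test statistic `q̂_k² = T̂_k - 2Ŝ_k + q_k²(f₀)`. -/
def qhat (c k : ℝ) (w φ f₀ : ℝ → ℝ) {n : ℕ} (Y : Fin n → Ω → ℝ) (ω : Ω) : ℝ :=
  (That c k w φ Y ω - 2 * Shat c k w φ f₀ Y ω).re + qk2 c k w f₀

/-- The critical value `τ_k(α)`. -/
def τcrit (c k α : ℝ) (w φ f₀ : ℝ → ℝ) (n : ℕ) : ℝ :=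
  (18 * cphi c φ * V2c c f₀ φ
      + 69493 * (Real.sqrt (2 * k) / (n : ℝ)) * (Lq (α / 2) / α)) *
    Real.sqrt (Lq (α / 2)) * Real.sqrt (Δ4 c k w φ) / (n : ℝ)
  + 52 * Vc c f₀ φ * cphi c φ * Lq (α / 2) * Real.sqrt (Δinf c k w φ) / (n : ℝ)

/-- `Y₁,…,Y_n` are i.i.d. with Lebesgue density `g`. -/
def IID (P : Measure Ω) {n : ℕ} (Y : Fin n → Ω → ℝ) (g : ℝ → ℝ) : Prop :=
  ProbabilityTheory.iIndepFun (m := fun _ : Fin n => (inferInstance : MeasurableSpace ℝ)) Y P ∧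
  ∀ j, Measurable (Y j) ∧
    Measure.map (Y j) P = (volume : Measure ℝ).withDensity (fun y => ENNReal.ofReal (g y))


/-- Regularity-function assumptions: `s ≥ 1` symmetric non-decreasing with `s(t) → ∞`,
and `w/s` symmetric non-increasing with `w(t)/s(t) → 0` as `|t| → ∞`. -/
def RegFun (w s : ℝ → ℝ) : Prop :=
  (∀ t, 1 ≤ s t) ∧ (∀ t, s (-t) = s t) ∧ MonotoneOn s (Ici 0) ∧
    Tendsto s atTop atTop ∧
    (∀ t, w (-t) / s (-t) = w t / s t) ∧ AntitoneOn (fun t => w t / s t) (Ici 0) ∧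
    Tendsto (fun t => w t / s t) atTop (nhds 0)

/-- Membership in the regularity class `E_s^R`. -/
def inEs (c R : ℝ) (s h : ℝ → ℝ) : Prop :=
  MemW1 (c - 1) h ∧ MemW2 (2 * c - 1) h ∧
    (∫ t : ℝ, s t ^ 2 * ‖mellinT c h t‖ ^ 2) ≤ R ^ 2

/-- Membership in the class `D_v` of densities with uniformly bounded moment constant. -/
def inDv (c v : ℝ) (φ h : ℝ → ℝ) : Prop :=
  regD c h ∧ MemW1 (4 * (c - 1)) h ∧ V2c c h φ ≤ v

/-- `ρ_{k,s}² = (w²(k)/s²(k)) ∨ (1/n)(√Δ₄(k) ∨ √Δ∞(k))`. -/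
def ρks2 (c : ℝ) (w φ s : ℝ → ℝ) (k : ℝ) (n : ℕ) : ℝ :=
  max (w k ^ 2 / s k ^ 2)
    ((1 / (n : ℝ)) * max (Real.sqrt (Δ4 c k w φ)) (Real.sqrt (Δinf c k w φ)))

/-- `η_k² = 1 ∨ √(2k)/(dn)`. -/
def ηk2 (k d : ℝ) (n : ℕ) : ℝ := max 1 (Real.sqrt (2 * k) / (d * (n : ℝ)))

/-- The Bonferroni-corrected critical value `τ_{k|α}` for a collection of cardinality `m`. -/
def τbon (c k α : ℝ) (m : ℕ) (p : ℝ) (w φ f₀ : ℝ → ℝ) (n : ℕ) : ℝ :=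
  (18 * cphi c φ * Vpc c p f₀ φ
      + 69493 * (Real.sqrt (2 * k) * (m : ℝ) ^ ((1 : ℝ) / (p - 1)) / (n : ℝ))
          * (Lq (α / (2 * (m : ℝ))) ^ 2 / α)) *
    Real.sqrt (Lq (α / (2 * (m : ℝ)))) * Real.sqrt (Δ4 c k w φ) / (n : ℝ)
  + 52 * Vc c f₀ φ * cphi c φ * Lq (α / (2 * (m : ℝ))) * Real.sqrt (Δinf c k w φ) / (n : ℝ)

/-- The adaptive factor `δ_𝒦 = (1 + log |𝒦|)^{-1/2}`. -/
def δK (m : ℕ) : ℝ := (1 + Real.log (m : ℝ)) ^ (-(1 : ℝ) / 2)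

/-- `r_{k,s}² = (w²(k)/s²(k)) ∨ (1/n)(δ_𝒦⁻¹ √Δ₄(k) ∨ δ_𝒦⁻² √Δ∞(k))`. -/
def rks2 (c : ℝ) (w φ s : ℝ → ℝ) (k : ℝ) (m n : ℕ) : ℝ :=
  max (w k ^ 2 / s k ^ 2)
    ((1 / (n : ℝ)) * max ((δK m)⁻¹ * Real.sqrt (Δ4 c k w φ))
        (((δK m)⁻¹) ^ 2 * Real.sqrt (Δinf c k w φ)))

/-- `η_{𝒦,s}² = 1 ∨ √(2k₀)|𝒦|^{1/(p-1)}/(dn δ_𝒦⁴)`. -/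
def ηKs2 (k₀ : ℝ) (m : ℕ) (p d : ℝ) (n : ℕ) : ℝ :=
  max 1 (Real.sqrt (2 * k₀) * (m : ℝ) ^ ((1 : ℝ) / (p - 1)) / (d * (n : ℝ) * δK m ^ 4))

/-- The truncated complex power `b(y,t) = 1_{[0,δ]}(y^{c-1}) y^{c-1+2πit}`. -/
def bfun (c δ : ℝ) (y t : ℝ) : ℂ := if y ^ (c - 1) ∈ Icc (0 : ℝ) δ then cpw c t y else 0

/-- `E[b(Y,t)]` for `Y` with density `g` on `(0,∞)`. -/
def Ebfun (c δ : ℝ) (g : ℝ → ℝ) (t : ℝ) : ℂ := ∫ y in Ioi (0 : ℝ), bfun c δ y t * (g y : ℂ)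

/-- The bounded kernel `h_k^b`. -/
def hkb (c δ k : ℝ) (w φ g : ℝ → ℝ) (x y : ℝ) : ℂ :=
  ∫ t in Icc (-k) k,
    (bfun c δ y t - Ebfun c δ g t) * (bfun c δ x (-t) - Ebfun c δ g (-t)) * (wgt c w φ t : ℂ)

/-- `ṽ(x,t) = x^{c-1+2πit} - E[Y^{c-1+2πit}]` for `Y` with density `g`. -/
def vtil (c : ℝ) (g : ℝ → ℝ) (x t : ℝ) : ℂ := cpw c t x - mellinT c g t

/-- The full (unbounded) kernel `h_k` of the canonical U-statistic. -/
def hkfull (c k : ℝ) (w φ g : ℝ → ℝ) (x y : ℝ) : ℂ :=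
  ∫ t in Icc (-k) k, vtil c g x t * vtil c g y (-t) * (wgt c w φ t : ℂ)

variable {Ω' : Type*} [MeasurableSpace Ω']

/-- The U-statistic with kernel `h` built from the sample `Y`. -/
def Ustat (h : ℝ → ℝ → ℂ) {n : ℕ} (Y : Fin n → Ω' → ℝ) (ω : Ω') : ℂ :=
  ((n : ℂ) * ((n : ℂ) - 1))⁻¹ *
    ∑ j : Fin n, ∑ l : Fin n, if j ≠ l then h (Y j ω) (Y l ω) else 0

/-- The centred linear statistic `W_k` (with `g = f*φ` and `g₀ = f₀*φ`). -/
def Wstat (c k : ℝ) (w φ g g₀ : ℝ → ℝ) {n : ℕ} (Y : Fin n → Ω' → ℝ) (ω : Ω') : ℂ :=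
  (n : ℂ)⁻¹ * ∑ j : Fin n,
    ∫ t in Icc (-k) k,
      vtil c g (Y j ω) t * (starRingEnd ℂ) (mellinT c g t - mellinT c g₀ t) * (wgt c w φ t : ℂ)

/-- Mellin transform of a complex-valued function. -/
def mellinTC (c : ℝ) (g : ℝ → ℂ) (t : ℝ) : ℂ := ∫ x in Ioi (0 : ℝ), cpw c t x * g x

/-- Multiplicative convolution of complex-valued functions. -/
def mconvC (f g : ℝ → ℂ) (y : ℝ) : ℂ := ∫ x in Ioi (0 : ℝ), f x * g (y / x) / (x : ℂ)

/-- Weighted `L¹`-norm of a complex-valued function. -/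
def wnorm1C (a : ℝ) (h : ℝ → ℂ) : ℝ := ∫ x in Ioi (0 : ℝ), ‖h x‖ * x ^ a

/-- Membership in `L¹((0,∞), xᵃ dx)` for complex-valued functions. -/
def MemW1C (a : ℝ) (h : ℝ → ℂ) : Prop :=
  AEStronglyMeasurable h (volume.restrict (Ioi 0)) ∧
    IntegrableOn (fun x => ‖h x‖ * x ^ a) (Ioi 0)

/-- Weighted `L²`-norm of a complex-valued function. -/
def wnorm2C (a : ℝ) (h : ℝ → ℂ) : ℝ :=
  Real.sqrt (∫ x in Ioi (0 : ℝ), ‖h x‖ ^ 2 * x ^ a)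

/-- Membership in `L²((0,∞), xᵃ dx)` for complex-valued functions. -/
def MemW2C (a : ℝ) (h : ℝ → ℂ) : Prop :=
  AEStronglyMeasurable h (volume.restrict (Ioi 0)) ∧
    IntegrableOn (fun x => ‖h x‖ ^ 2 * x ^ a) (Ioi 0)

/-- Weighted `L^∞`-norm of a complex-valued function, valued in `ℝ≥0∞`. -/
def wnormInfC (a : ℝ) (h : ℝ → ℂ) : ℝ≥0∞ :=
  essSup (fun x => ENNReal.ofReal (‖h x‖ * x ^ a)) (volume.restrict (Ioi 0))


open scoped FourierTransform SchwartzMap ContDiff in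
/-- The pointwise Fourier integral of an `L¹ ∩ L²` function agrees a.e. with the `L²` one. -/
lemma fourier_ae_eq (f : ℝ → ℂ) (h1 : Integrable f) (h2 : MemLp f 2) :
    (𝓕 f : ℝ → ℂ) =ᵐ[volume] (𝓕 (h2.toLp f) : Lp (α := ℝ) ℂ 2) := by
  have hcont : Continuous (𝓕 f : ℝ → ℂ) :=
    VectorFourier.fourierIntegral_continuous Real.continuous_fourierChar
      (by exact continuous_inner) h1
  apply ae_eq_of_integral_contDiff_smul_eq hcont.locallyIntegrable
    ((Lp.memLp _).locallyIntegrable (by norm_num))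
  intro φ φs φc
  have hg₁ : HasCompactSupport (Complex.ofRealCLM ∘ φ) := φc.comp_left rfl
  have hg₂ : ContDiff ℝ ∞ (Complex.ofRealCLM ∘ φ) := by fun_prop
  set ψ : 𝓢(ℝ, ℂ) := hg₁.toSchwartzMap hg₂ with hψ
  have key := congrArg (fun T : 𝓢'(ℝ, ℂ) => T ψ)
    (Lp.fourier_toTemperedDistribution_eq (h2.toLp f))
  simp only [TemperedDistribution.fourier_apply, Lp.toTemperedDistribution_apply] at key
  have hψx : ∀ x, ψ x = (φ x : ℂ) := fun x => by simp [hψ]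
  have e1 : ∫ x, (𝓕 ψ) x • (h2.toLp f : ℝ → ℂ) x = ∫ x, (𝓕 (ψ : ℝ → ℂ)) x • f x := by
    apply integral_congr_ae
    filter_upwards [h2.coeFn_toLp] with x hx
    rw [hx, SchwartzMap.fourier_coe]
  have e2 : ∫ x, (𝓕 (ψ : ℝ → ℂ)) x • f x = ∫ x, ψ x • 𝓕 f x := by
    simpa using! VectorFourier.integral_fourierIntegral_smul_eq_flip (L := innerₗ ℝ)
      Real.continuous_fourierChar (by exact continuous_inner) ψ.integrable h1
  rw [e1, e2] at key
  simp only [hψx] at key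
  simpa using! key

open scoped FourierTransform in
/-- Plancherel for `L¹ ∩ L²` functions. -/
lemma plancherel_aux (f : ℝ → ℂ) (h1 : Integrable f) (h2 : MemLp f 2) :
    Integrable (fun s => ‖𝓕 f s‖ ^ 2) ∧ ∫ s, ‖𝓕 f s‖ ^ 2 = ∫ t, ‖f t‖ ^ 2 := by
  have hae := fourier_ae_eq f h1 h2
  have hm : MemLp (𝓕 f : ℝ → ℂ) 2 := (memLp_congr_ae hae).2 (Lp.memLp _)
  refine ⟨(memLp_two_iff_integrable_sq_norm hm.1).1 hm, ?_⟩
  have hn := Lp.norm_fourier_eq (h2.toLp f)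
  have hsq : ∀ u : Lp (α := ℝ) ℂ 2, ‖u‖ ^ 2 = ∫ t, ‖u t‖ ^ 2 := by
    intro u
    have h := @L2.inner_def ℝ ℂ ℂ _ _ _ _ _ u u
    rw [inner_self_eq_norm_sq_to_K] at h
    have h' : (((‖u‖ ^ 2 : ℝ)) : ℂ) = ((∫ t, ‖u t‖ ^ 2 : ℝ) : ℂ) := by
      rw [← integral_complex_ofReal]
      simpa [inner_self_eq_norm_sq_to_K] using h
    exact_mod_cast h'
  have a1 : ∫ s, ‖𝓕 f s‖ ^ 2 = ‖𝓕 (h2.toLp f)‖ ^ 2 := by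
    rw [hsq]
    exact integral_congr_ae (by filter_upwards [hae] with x hx; rw [hx])
  have a2 : ∫ t, ‖f t‖ ^ 2 = ‖h2.toLp f‖ ^ 2 := by
    rw [hsq]
    exact integral_congr_ae (by filter_upwards [h2.coeFn_toLp] with x hx; rw [hx])
  rw [a1, a2, hn]

open scoped FourierTransform in
lemma inner_int_eq (c k : ℝ) (h : ℝ → ℂ) (y : ℝ) (hy : 0 < y) :
    ‖∫ t in Icc (-k) k, cpw c t y * h t‖ ^ 2
      = y ^ (2 * c - 1) * (y⁻¹ * ‖𝓕 ((Icc (-k) k).indicator h) (-Real.log y)‖ ^ 2) := by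
  have hy' : (y : ℂ) ≠ 0 := by exact_mod_cast hy.ne'
  have e : ∫ t in Icc (-k) k, cpw c t y * h t
      = ((y ^ (c - 1) : ℝ) : ℂ) * 𝓕 ((Icc (-k) k).indicator h) (-Real.log y) := by
    rw [Real.fourier_real_eq_integral_exp_smul, ← integral_const_mul,
      ← integral_indicator measurableSet_Icc]
    congr 1
    ext t
    by_cases ht : t ∈ Icc (-k) k
    · simp only [indicator_of_mem ht, smul_eq_mul]
      rw [← mul_assoc]
      congr 1
      rw [cpw, Complex.cpow_add _ _ hy', Complex.ofReal_cpow hy.le]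
      congr 1
      · push_cast; rfl
      · rw [Complex.cpow_def_of_ne_zero hy', ← Complex.ofReal_log hy.le]
        congr 1
        push_cast
        ring
    · simp [indicator_of_notMem ht]
  rw [e, norm_mul, mul_pow, Complex.norm_real, Real.norm_of_nonneg (by positivity), ← mul_assoc]
  congr 1
  rw [← Real.rpow_natCast, ← Real.rpow_mul hy.le, ← Real.rpow_neg_one, ← Real.rpow_add hy]
  congr 1
  push_cast
  ring

lemma change_var (G : ℝ → ℝ) (hG : Integrable G) :
    IntegrableOn (fun y => y⁻¹ * G (-Real.log y)) (Ioi 0) ∧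
      ∫ y in Ioi (0 : ℝ), y⁻¹ * G (-Real.log y) = ∫ s, G s := by
  have him : (fun x : ℝ => Real.exp (-x)) '' univ = Ioi 0 := by
    ext y
    simp only [image_univ, mem_range, mem_Ioi]
    exact ⟨fun ⟨x, hx⟩ => hx ▸ Real.exp_pos _, fun hy => ⟨-Real.log y, by simp [Real.exp_log hy]⟩⟩
  have hd : ∀ x ∈ (univ : Set ℝ), HasDerivWithinAt (fun x : ℝ => Real.exp (-x))
      (Real.exp (-x) * (-1)) univ x :=
    fun x _ => ((hasDerivAt_neg x).exp).hasDerivWithinAt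
  have hinj : InjOn (fun x : ℝ => Real.exp (-x)) univ := fun a _ b _ hab => by simpa using hab
  have hfun : (fun x : ℝ => |Real.exp (-x) * (-1)| •
      ((Real.exp (-x))⁻¹ * G (-Real.log (Real.exp (-x))))) = G := by
    ext x
    simp only [mul_neg, mul_one, abs_neg, abs_of_pos (Real.exp_pos _), Real.log_exp, neg_neg,
      smul_eq_mul]
    rw [← mul_assoc, mul_inv_cancel₀ (Real.exp_pos _).ne', one_mul]
  rw [← him]
  constructor
  · rw [integrableOn_image_iff_integrableOn_abs_deriv_smul MeasurableSet.univ hd hinj, hfun]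
    exact hG.integrableOn
  · rw [integral_image_eq_integral_abs_deriv_smul MeasurableSet.univ hd hinj, hfun,
      setIntegral_univ]

/-- Lemma A.4 (ii): moment bound for oscillatory Mellin integrals: for a
random variable `Y` with density `g` on `(0,∞)` satisfying `‖g‖_{L^∞(x^{2c-1})} < ∞` and
`1_{[-k,k]}h ∈ L²(ℝ)`,
`E[|∫_{-k}^k Y^{c-1+2πit} h(t) dt|²] ≤ ‖g‖_{L^∞(x^{2c-1})} ∫_{-k}^k |h(t)|² dt`. -/
theorem moment_bound_oscillatory_mellin
    (c k : ℝ) (hk : 0 < k) (g : ℝ → ℝ) (hg : IsDensity g)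
    (hginf : wnormInf (2 * c - 1) g ≠ ⊤)
    (h : ℝ → ℂ)
    (hmeas : AEStronglyMeasurable h (volume.restrict (Icc (-k) k)))
    (hL2 : IntegrableOn (fun t => ‖h t‖ ^ 2) (Icc (-k) k)) :
    (∫ y in Ioi (0 : ℝ), ‖∫ t in Icc (-k) k, cpw c t y * h t‖ ^ 2 * g y)
      ≤ wnormInfR (2 * c - 1) g * ∫ t in Icc (-k) k, ‖h t‖ ^ 2 := by
  have h2r : MemLp h 2 (volume.restrict (Icc (-k) k)) :=
    (memLp_two_iff_integrable_sq_norm hmeas).2 hL2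
  have h1r : IntegrableOn h (Icc (-k) k) := h2r.integrable (by norm_num)
  set f := (Icc (-k) k).indicator h with hf
  have h2 : MemLp f 2 := (memLp_indicator_iff_restrict measurableSet_Icc).2 h2r
  have h1 : Integrable f := h1r.integrable_indicator measurableSet_Icc
  obtain ⟨p1, p2⟩ := plancherel_aux f h1 h2
  obtain ⟨q1, q2⟩ := change_var _ p1
  have e3 : ∫ t, ‖f t‖ ^ 2 = ∫ t in Icc (-k) k, ‖h t‖ ^ 2 := by
    rw [← integral_indicator measurableSet_Icc]
    congr 1
    ext t
    by_cases ht : t ∈ Icc (-k) k <;> simp [hf, ht]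
  rw [← e3, ← p2, ← q2, ← integral_const_mul]
  apply integral_mono_of_nonneg
  · exact Eventually.of_forall fun y => mul_nonneg (by positivity) (hg.1 y)
  · exact q1.const_mul _
  · have hae : ∀ᵐ y ∂(volume.restrict (Ioi (0 : ℝ))),
        ENNReal.ofReal (|g y| * y ^ (2 * c - 1)) ≤ wnormInf (2 * c - 1) g := ENNReal.ae_le_essSup _
    filter_upwards [hae, ae_restrict_mem measurableSet_Ioi] with y hy hy0
    have hy0' : 0 < y := hy0
    have hb : g y * y ^ (2 * c - 1) ≤ wnormInfR (2 * c - 1) g := by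
      have := (ENNReal.ofReal_le_iff_le_toReal hginf).1 hy
      rwa [abs_of_nonneg (hg.1 y)] at this
    rw [inner_int_eq c k h y hy0']
    calc _ = (g y * y ^ (2 * c - 1)) * _ := by rw [mul_right_comm, mul_comm (y ^ _)]
      _ ≤ _ := mul_le_mul_of_nonneg_right hb (by positivity)

end MultErr
end
end

section
/- Bessel-type bound for Mellin coefficients: Let c ∈ ℝ, let g be a Lebesgue probability density on (0,∞) with ‖g‖_{L^∞(x^{2c−1})} = ess sup_{x>0} g(x) x^{2c−1} < ∞, let Y be a random variable with density g, and let h : (0,∞) → ℝ satisfy E[h²(Y)] < ∞. Then ∫_ℝ |E[Y^{c−1+2πit} h(Y)]|² dt ≤ ‖g‖_{L^∞(x^{2c−1})} E[h²(Y)]. -/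
open MeasureTheory Set Filter
open scoped ENNReal

noncomputable section

namespace MultErr

variable {Ω : Type*} [MeasurableSpace Ω]

variable {Ω' : Type*} [MeasurableSpace Ω']

section Helpers
open scoped FourierTransform SchwartzMap

lemma plancherel_L1_L2 (f : ℝ → ℂ) (h1 : Integrable f) (h2 : MemLp f 2) :
    ∫ t : ℝ, ‖𝓕 f t‖ ^ 2 = ∫ x : ℝ, ‖f x‖ ^ 2 := by
  set F : Lp ℂ 2 (volume : Measure ℝ) := h2.toLp f with hF
  have hcont : Continuous (𝓕 f) :=
    VectorFourier.fourierIntegral_continuous Real.continuous_fourierChar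
      (by exact continuous_inner) h1
  have hae : (𝓕 f : ℝ → ℂ) =ᵐ[volume] (𝓕 F : Lp ℂ 2 (volume : Measure ℝ)) := by
    apply ae_eq_of_integral_contDiff_smul_eq hcont.locallyIntegrable
      ((Lp.memLp (𝓕 F : Lp ℂ 2 (volume : Measure ℝ))).locallyIntegrable (by norm_num))
    intro φ hφ hφc
    have hφ1 : HasCompactSupport (fun x => (φ x : ℂ)) := hφc.comp_left (g := fun r : ℝ => (r : ℂ)) (by simp)
    have hφ2 : ContDiff ℝ (⊤ : ℕ∞) (fun x => (φ x : ℂ)) := Complex.ofRealCLM.contDiff.comp hφ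
    let S : 𝓢(ℝ, ℂ) := hφ1.toSchwartzMap hφ2
    have hS : ∀ x, S x = (φ x : ℂ) := fun x => rfl
    have e1 : (F : 𝓢'(ℝ, ℂ)) (𝓕 S) = ((𝓕 F : Lp ℂ 2 (volume : Measure ℝ)) : 𝓢'(ℝ, ℂ)) S := by
      rw [← Lp.fourier_toTemperedDistribution_eq]; rfl
    rw [Lp.toTemperedDistribution_apply, Lp.toTemperedDistribution_apply] at e1
    have e2 : ∫ x, (𝓕 S) x • F x = ∫ x, (𝓕 S) x • f x := by
      apply integral_congr_ae
      filter_upwards [h2.coeFn_toLp] with x hx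
      rw [hF, hx]
    have e3 : ∫ x, (𝓕 (S : ℝ → ℂ)) x • f x = ∫ x, S x • 𝓕 f x := by
      have := VectorFourier.integral_fourierIntegral_smul_eq_flip (μ := (volume : Measure ℝ))
        (ν := (volume : Measure ℝ)) (L := innerₗ ℝ) (f := (S : ℝ → ℂ)) (g := f)
        Real.continuous_fourierChar (by exact continuous_inner) S.integrable h1
      rw [flip_innerₗ] at this
      exact this
    have e4 : (𝓕 (S : ℝ → ℂ)) = ((𝓕 S : 𝓢(ℝ, ℂ)) : ℝ → ℂ) := by
      rw [SchwartzMap.fourier_coe]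
    rw [e2, ← e4, e3] at e1
    simpa [hS] using e1
  have hn : ‖(𝓕 F : Lp ℂ 2 (volume : Measure ℝ))‖ ^ 2 = ‖F‖ ^ 2 := by rw [Lp.norm_fourier_eq]
  have key : ∀ G : Lp ℂ 2 (volume : Measure ℝ), ‖G‖ ^ 2 = ∫ x, ‖G x‖ ^ 2 := by
    intro G
    have h : (inner ℂ G G : ℂ) = ∫ x, inner ℂ (G x) (G x) := L2.inner_def G G
    have h' : ((‖G‖ ^ 2 : ℝ) : ℂ) = ((∫ x, ‖G x‖ ^ 2 : ℝ) : ℂ) := by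
      rw [← integral_complex_ofReal]
      simpa [inner_self_eq_norm_sq_to_K] using h
    exact_mod_cast h'
  rw [key, key] at hn
  calc ∫ t : ℝ, ‖𝓕 f t‖ ^ 2 = ∫ t, ‖(𝓕 F : Lp ℂ 2 (volume : Measure ℝ)) t‖ ^ 2 := by
        apply integral_congr_ae
        filter_upwards [hae] with x hx
        rw [hx]
    _ = ∫ t, ‖F t‖ ^ 2 := hn
    _ = _ := by
        apply integral_congr_ae
        filter_upwards [h2.coeFn_toLp] with x hx
        rw [hF, hx]

lemma exp_neg_image : (fun x : ℝ => Real.exp (-x)) '' univ = Ioi 0 := by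
  ext y
  simp only [image_univ, mem_range, mem_Ioi]
  exact ⟨fun ⟨x, hx⟩ => hx ▸ Real.exp_pos _, fun hy => ⟨-Real.log y, by simp [Real.exp_log hy]⟩⟩

lemma exp_neg_deriv : ∀ x ∈ (univ : Set ℝ),
    HasDerivWithinAt (fun x : ℝ => Real.exp (-x)) (-Real.exp (-x)) univ x := by
  intro x _
  simpa using ((hasDerivAt_neg x).exp).hasDerivWithinAt (s := univ)

lemma exp_neg_inj : InjOn (fun x : ℝ => Real.exp (-x)) univ := by
  intro x _ y _ h
  simpa using h

lemma bound_ae (a : ℝ) (g : ℝ → ℝ) (hg : ∀ x, 0 ≤ g x) (hginf : wnormInf a g ≠ ⊤) :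
    ∀ᵐ y ∂(volume.restrict (Ioi (0 : ℝ))), g y * y ^ a ≤ wnormInfR a g := by
  have := ENNReal.ae_le_essSup (μ := volume.restrict (Ioi (0 : ℝ)))
    (fun x => ENNReal.ofReal (|g x| * x ^ a))
  filter_upwards [this] with y hy
  rw [abs_of_nonneg (hg y)] at hy
  exact (ENNReal.ofReal_le_iff_le_toReal hginf).1 hy

end Helpers

/-- Lemma A.4 (iii): Bessel-type bound for Mellin coefficients: for a random
variable `Y` with density `g` on `(0,∞)` satisfying `‖g‖_{L^∞(x^{2c-1})} < ∞` and a real-valued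
`h` with `E[h²(Y)] < ∞`,
`∫_ℝ |E[Y^{c-1+2πit} h(Y)]|² dt ≤ ‖g‖_{L^∞(x^{2c-1})} E[h²(Y)]`. -/
theorem bessel_bound_mellin_coefficients
    (c : ℝ) (g : ℝ → ℝ) (hg : IsDensity g)
    (hginf : wnormInf (2 * c - 1) g ≠ ⊤)
    (h : ℝ → ℝ)
    (hmeas : AEStronglyMeasurable h (volume.restrict (Ioi 0)))
    (hL2 : IntegrableOn (fun y => h y ^ 2 * g y) (Ioi 0)) :
    (∫ t : ℝ, ‖∫ y in Ioi (0 : ℝ), cpw c t y * ((h y * g y : ℝ) : ℂ)‖ ^ 2)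
      ≤ wnormInfR (2 * c - 1) g * ∫ y in Ioi (0 : ℝ), h y ^ 2 * g y := by
  classical
  obtain ⟨hg0, -, hgi, -⟩ := hg
  set C := wnormInfR (2 * c - 1) g with hC
  have hC0 : 0 ≤ C := ENNReal.toReal_nonneg
  set u : ℝ → ℂ := fun x => Real.exp (-c * x) •
    ((h (Real.exp (-x)) * g (Real.exp (-x)) : ℝ) : ℂ) with hu
  have hm : ∀ t : ℝ, (∫ y in Ioi (0 : ℝ), cpw c t y * ((h y * g y : ℝ) : ℂ))
      = FourierTransform.fourier u t := by
    intro t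
    have := mellin_eq_fourier (fun y => ((h y * g y : ℝ) : ℂ))
      (s := (c : ℂ) + 2 * Real.pi * Complex.I * (t : ℂ))
    have hre : ((c : ℂ) + 2 * Real.pi * Complex.I * (t : ℂ)).re = c := by simp
    have him : ((c : ℂ) + 2 * Real.pi * Complex.I * (t : ℂ)).im / (2 * Real.pi) = t := by
      have : ((c : ℂ) + 2 * Real.pi * Complex.I * (t : ℂ)).im = 2 * Real.pi * t := by simp
      rw [this]; field_simp
    rw [hre, him] at this
    rw [hu, ← this, mellin]
    congr 1
    ext y
    rw [cpw, smul_eq_mul]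
    congr 2
    ring
  simp_rw [hm]
  have hR0 : 0 ≤ ∫ y in Ioi (0 : ℝ), h y ^ 2 * g y :=
    integral_nonneg fun y => mul_nonneg (sq_nonneg _) (hg0 y)
  by_cases hI : Integrable u
  swap
  · have : ∀ t : ℝ, FourierTransform.fourier u t = 0 := by
      intro t
      rw [Real.fourier_eq]
      apply integral_undef
      rwa [Real.fourierIntegral_convergent_iff]
    simp only [this]
    simpa using mul_nonneg hC0 hR0
  set k : ℝ → ℝ := fun y => (h y * g y) ^ 2 * y ^ (2 * c - 1) with hk
  have hbd : ∀ᵐ y ∂(volume.restrict (Ioi (0 : ℝ))), k y ≤ C * (h y ^ 2 * g y) := by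
    filter_upwards [bound_ae (2 * c - 1) g hg0 hginf] with y hy
    have := mul_le_mul_of_nonneg_left hy (mul_nonneg (sq_nonneg (h y)) (hg0 y))
    simp only [hk]
    nlinarith [this]
  have hk0 : ∀ᵐ y ∂(volume.restrict (Ioi (0 : ℝ))), 0 ≤ k y := by
    filter_upwards [ae_restrict_mem measurableSet_Ioi] with y hy
    exact mul_nonneg (sq_nonneg _) (Real.rpow_nonneg (le_of_lt hy) _)
  have hki : IntegrableOn k (Ioi 0) := by
    refine Integrable.mono' (hL2.const_mul C) ?_ ?_
    · refine ((hmeas.mul hgi.aestronglyMeasurable).pow 2).mul ?_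
      exact (measurable_id.pow_const _).aestronglyMeasurable
    · filter_upwards [hbd, hk0] with y h1 h2
      rw [Real.norm_of_nonneg h2]; exact h1
  have hpt : ∀ x, ‖u x‖ ^ 2 = |-Real.exp (-x)| • k (Real.exp (-x)) := by
    intro x
    simp only [hu, hk, norm_smul, Complex.norm_real, Real.norm_eq_abs, abs_neg, Real.abs_exp,
      smul_eq_mul, mul_pow, sq_abs]
    rw [← Real.exp_mul, ← Real.exp_nat_mul]
    have : Real.exp ((2 : ℕ) * (-c * x)) = Real.exp (-x) * Real.exp (-x * (2 * c - 1)) := by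
      rw [← Real.exp_add]; congr 1; push_cast; ring
    rw [this]; ring
  have hint : Integrable (fun x => ‖u x‖ ^ 2) := by
    have := (integrableOn_image_iff_integrableOn_abs_deriv_smul MeasurableSet.univ
      exp_neg_deriv exp_neg_inj k).1 (by rw [exp_neg_image]; exact hki)
    rw [integrableOn_univ] at this
    simpa only [hpt] using this
  have hval : ∫ x, ‖u x‖ ^ 2 = ∫ y in Ioi (0 : ℝ), k y := by
    rw [← exp_neg_image, integral_image_eq_integral_abs_deriv_smul MeasurableSet.univ
      exp_neg_deriv exp_neg_inj, setIntegral_univ]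
    simp only [hpt]
  have hL : MemLp u 2 := (memLp_two_iff_integrable_sq_norm hI.aestronglyMeasurable).2 hint
  rw [plancherel_L1_L2 u hI hL, hval, ← integral_const_mul]
  exact integral_mono_ae hki (hL2.const_mul C) hbd

end MultErr
end
end

section
/- Unbiasedness and decomposition of the test statistic: In the multiplicative measurement error model, assume M_c[φ](t) ≠ 0 for all t and 1_{[−k,k]} w/M_c[φ] essentially bounded for all k > 0. Then for every k > 0 and n ≥ 2: (a) E[q̂_k²] = q_k²(f − f₀); and (b) q̂_k² = U_k + 2 W_k + q_k²(f − f₀), where U_k = (n(n−1))⁻¹ Σ_{j₁≠j₂} ∫_{−k}^{k} ṽ(Y_{j₁},t) ṽ(Y_{j₂},−t) |M_c[φ](t)|^{−2} w²(t) dt is a canonical U-statistic and W_k = n⁻¹ Σ_{j=1}^{n} ∫_{−k}^{k} ṽ(Y_j,t) (M_c[f_Y](t) − M_c[f₀Y](t))‾ |M_c[φ](t)|^{−2} w²(t) dt is a centred linear statistic, with ṽ(x,t) = x^{c−1+2πit} − E[Y^{c−1+2πit}]. -/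
open MeasureTheory Set Filter
open scoped ENNReal

noncomputable section

namespace MultErr

variable {Ω : Type*} [MeasurableSpace Ω]

variable {Ω' : Type*} [MeasurableSpace Ω']

lemma cpw_norm_pos (c t : ℝ) {x : ℝ} (hx : 0 < x) : ‖cpw c t x‖ = x ^ (c - 1) := by
  unfold cpw
  rw [Complex.norm_cpow_eq_rpow_re_of_pos hx]
  simp

lemma cpw_norm_le (c k t x : ℝ) (ht : t ∈ Icc (-k) k) :
    ‖cpw c t x‖ ≤ |x| ^ (c - 1) * Real.exp (Real.pi * (2 * Real.pi * k)) := by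
  unfold cpw
  refine (Complex.norm_cpow_le _ _).trans ?_
  rw [div_eq_mul_inv, ← Real.exp_neg]
  have h1 : ((c : ℂ) - 1 + 2 * Real.pi * Complex.I * (t : ℂ)).re = c - 1 := by simp
  have h2 : ((c : ℂ) - 1 + 2 * Real.pi * Complex.I * (t : ℂ)).im = 2 * Real.pi * t := by simp
  rw [h1, h2, Complex.norm_real, Real.norm_eq_abs]
  refine mul_le_mul_of_nonneg_left ?_ (Real.rpow_nonneg (abs_nonneg _) _)
  apply Real.exp_le_exp.mpr
  refine (neg_le_abs _).trans ?_
  rw [abs_mul]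
  have h3 : |2 * Real.pi * t| ≤ 2 * Real.pi * k := by
    rw [abs_mul, abs_of_pos Real.two_pi_pos]
    exact mul_le_mul_of_nonneg_left (abs_le.mpr ht) Real.two_pi_pos.le
  exact mul_le_mul (Complex.abs_arg_le_pi _) h3 (abs_nonneg _) Real.pi_pos.le

lemma cpw_measurable (c : ℝ) : Measurable (fun p : ℝ × ℝ => cpw c p.1 p.2) := by
  unfold cpw
  fun_prop

lemma cpw_mul (c t : ℝ) {x y : ℝ} (hx : 0 < x) (hy : 0 < y) :
    cpw c t (x * y) = cpw c t x * cpw c t y := by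
  unfold cpw
  rw [Complex.ofReal_mul, Complex.mul_cpow_ofReal_nonneg hx.le hy.le]

lemma cpw_neg (c t : ℝ) {x : ℝ} (hx : 0 < x) :
    cpw c (-t) x = (starRingEnd ℂ) (cpw c t x) := by
  unfold cpw
  have h := Complex.cpow_conj (x : ℂ) ((c : ℂ) - 1 + 2 * Real.pi * Complex.I * (t : ℂ))
    (by rw [Complex.arg_ofReal_of_nonneg hx.le]; exact Real.pi_pos.ne)
  rw [Complex.conj_ofReal] at h
  rw [← h]
  simp [Complex.conj_ofNat]

lemma mellinT_neg (c : ℝ) (g : ℝ → ℝ) (t : ℝ) :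
    mellinT c g (-t) = (starRingEnd ℂ) (mellinT c g t) := by
  unfold mellinT
  rw [← integral_conj]
  refine setIntegral_congr_fun measurableSet_Ioi fun x hx => ?_
  simp [cpw_neg c t hx]

lemma cpw_integrable {c : ℝ} {h : ℝ → ℝ} (hm : AEStronglyMeasurable h (volume.restrict (Ioi 0)))
    (h1 : MemW1 (c - 1) h) (t : ℝ) :
    IntegrableOn (fun x => cpw c t x * (h x : ℂ)) (Ioi 0) := by
  refine Integrable.mono h1 ?_ ?_
  · refine AEStronglyMeasurable.mul ?_ (Complex.continuous_ofReal.comp_aestronglyMeasurable hm)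
    exact ((cpw_measurable c).comp (measurable_const.prodMk measurable_id)).aestronglyMeasurable
  · filter_upwards [ae_restrict_mem measurableSet_Ioi] with x hx
    have hx : 0 < x := hx
    have := Real.rpow_nonneg hx.le (c - 1)
    simp [cpw_norm_pos c t hx, mul_comm, abs_of_nonneg this]

lemma mellinT_continuous {c : ℝ} {h : ℝ → ℝ}
    (hm : AEStronglyMeasurable h (volume.restrict (Ioi 0)))
    (h1 : MemW1 (c - 1) h) : Continuous (mellinT c h) := by
  unfold mellinT
  refine continuous_of_dominated (bound := fun x => |h x| * x ^ (c - 1)) ?_ ?_ h1 ?_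
  · intro t; exact (cpw_integrable hm h1 t).aestronglyMeasurable
  · intro t
    filter_upwards [ae_restrict_mem measurableSet_Ioi] with x hx
    simp [cpw_norm_pos c t hx, mul_comm]
  · filter_upwards [ae_restrict_mem measurableSet_Ioi] with x hx
    have hx : (x : ℂ) ≠ 0 := Complex.ofReal_ne_zero.mpr (ne_of_gt hx)
    refine Continuous.mul ?_ continuous_const
    unfold cpw
    exact Continuous.const_cpow (by fun_prop) (Or.inl hx)

lemma mellinT_norm_le {c : ℝ} {h : ℝ → ℝ} (t : ℝ) :
    ‖mellinT c h t‖ ≤ wnorm1 (c - 1) h := by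
  unfold mellinT wnorm1
  refine (norm_integral_le_integral_norm _).trans (le_of_eq ?_)
  refine setIntegral_congr_fun measurableSet_Ioi fun x hx => ?_
  simp [cpw_norm_pos c t hx, mul_comm]

lemma div_qmp : Measure.QuasiMeasurePreserving (fun p : ℝ × ℝ => p.2 / p.1)
    ((volume.restrict (Ioi 0)).prod (volume.restrict (Ioi 0))) (volume.restrict (Ioi (0 : ℝ))) := by
  have hmeas : Measurable (fun p : ℝ × ℝ => p.2 / p.1) := by fun_prop
  refine ⟨hmeas, Measure.AbsolutelyContinuous.mk fun s hs h0 => ?_⟩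
  rw [Measure.map_apply hmeas hs, Measure.measure_prod_null (hmeas hs)]
  filter_upwards [ae_restrict_mem measurableSet_Ioi] with x hx
  have hx : 0 < x := hx
  rw [Measure.restrict_apply hs] at h0
  have : Prod.mk x ⁻¹' ((fun p : ℝ × ℝ => p.2 / p.1) ⁻¹' s) ∩ Ioi 0
      ⊆ (fun y => x⁻¹ * y) ⁻¹' (s ∩ Ioi 0) := by
    rintro y ⟨hy, hy0⟩
    refine ⟨?_, ?_⟩
    · have : y / x ∈ s := hy
      rwa [div_eq_inv_mul] at this
    · exact mul_pos (inv_pos.mpr hx) hy0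
  rw [Measure.restrict_apply (measurable_prodMk_left (hmeas hs))]
  refine measure_mono_null this ?_
  rw [Real.volume_preimage_mul_left (inv_ne_zero hx.ne'), h0, mul_zero]

lemma conv_aesm {f φ : ℝ → ℝ} (hf : AEStronglyMeasurable f (volume.restrict (Ioi 0)))
    (hφ : AEStronglyMeasurable φ (volume.restrict (Ioi 0))) :
    AEStronglyMeasurable (fun p : ℝ × ℝ => f p.1 * φ (p.2 / p.1) / p.1)
      ((volume.restrict (Ioi 0)).prod (volume.restrict (Ioi 0))) := by
  have h1 : AEStronglyMeasurable (fun p : ℝ × ℝ => f p.1)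
      ((volume.restrict (Ioi 0)).prod (volume.restrict (Ioi 0))) := hf.comp_fst
  have h2 : AEStronglyMeasurable (fun p : ℝ × ℝ => φ (p.2 / p.1))
      ((volume.restrict (Ioi 0)).prod (volume.restrict (Ioi 0))) :=
    hφ.comp_quasiMeasurePreserving div_qmp
  have h3 : Measurable (fun p : ℝ × ℝ => p.1⁻¹) := by fun_prop
  simp only [div_eq_mul_inv] at h2 ⊢
  exact (h1.mul h2).mul h3.aestronglyMeasurable

lemma mconv_aesm {f φ : ℝ → ℝ} (hf : AEStronglyMeasurable f (volume.restrict (Ioi 0)))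
    (hφ : AEStronglyMeasurable φ (volume.restrict (Ioi 0))) :
    AEStronglyMeasurable (mconv f φ) (volume.restrict (Ioi 0)) :=
  (conv_aesm hf hφ).prod_swap.integral_prod_right'

lemma conv_slice (c t : ℝ) (f φ : ℝ → ℝ) {x : ℝ} (hx : 0 < x) {y : ℝ} (hy : 0 < y) :
    cpw c t y * ((f x * φ (y / x) / x : ℝ) : ℂ)
      = (cpw c t x * (f x : ℂ) * (x : ℂ)⁻¹) * 
        (fun u => cpw c t u * (φ u : ℂ)) (x⁻¹ * y) := by
  have h := cpw_mul c t hx (mul_pos (inv_pos.mpr hx) hy)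
  rw [mul_inv_cancel_left₀ hx.ne'] at h
  rw [h, div_eq_inv_mul y x]
  push_cast
  ring

lemma conv_integrable {c t : ℝ} {f φ : ℝ → ℝ}
    (hf : AEStronglyMeasurable f (volume.restrict (Ioi 0)))
    (hφ : AEStronglyMeasurable φ (volume.restrict (Ioi 0)))
    (hf1 : MemW1 (c - 1) f) (hφ1 : MemW1 (c - 1) φ) :
    Integrable (fun p : ℝ × ℝ => cpw c t p.2 * ((f p.1 * φ (p.2 / p.1) / p.1 : ℝ) : ℂ))
      ((volume.restrict (Ioi 0)).prod (volume.restrict (Ioi 0))) := by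
  have hm : AEStronglyMeasurable
      (fun p : ℝ × ℝ => cpw c t p.2 * ((f p.1 * φ (p.2 / p.1) / p.1 : ℝ) : ℂ))
      ((volume.restrict (Ioi 0)).prod (volume.restrict (Ioi 0))) := by
    refine AEStronglyMeasurable.mul ?_
      (Complex.continuous_ofReal.comp_aestronglyMeasurable (conv_aesm hf hφ))
    exact ((cpw_measurable c).comp (measurable_const.prodMk measurable_snd)).aestronglyMeasurable
  have hφi := cpw_integrable hφ hφ1 t
  rw [integrable_prod_iff hm]
  constructor
  · filter_upwards [ae_restrict_mem measurableSet_Ioi] with x hx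
    have hx : 0 < x := hx
    have h1 : IntegrableOn (fun y => (cpw c t x * (f x : ℂ) * (x : ℂ)⁻¹) * 
        (fun u => cpw c t u * (φ u : ℂ)) (x⁻¹ * y)) (Ioi 0) := by
      refine Integrable.const_mul ?_ _
      have := (integrableOn_Ioi_comp_mul_left_iff (fun u => cpw c t u * (φ u : ℂ)) 0
        (inv_pos.mpr hx)).mpr (by rwa [mul_zero])
      exact this
    exact h1.congr_fun (fun y hy => (conv_slice c t f φ hx hy).symm) measurableSet_Ioi
  · have h2 : IntegrableOn (fun x => |f x| * x ^ (c - 1) *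
        ∫ u in Ioi (0:ℝ), ‖cpw c t u * (φ u : ℂ)‖) (Ioi 0) := hf1.mul_const _
    refine h2.congr_fun (fun x hx => ?_) measurableSet_Ioi
    have hx : 0 < x := hx
    have h3 : ∫ y in Ioi (0:ℝ), ‖cpw c t y * ((f x * φ (y / x) / x : ℝ) : ℂ)‖ =
        ∫ y in Ioi (0:ℝ), ‖cpw c t x * (f x : ℂ) * (x : ℂ)⁻¹‖ *
          (fun u => ‖cpw c t u * (φ u : ℂ)‖) (x⁻¹ * y) := by
      refine setIntegral_congr_fun measurableSet_Ioi fun y hy => ?_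
      simp only [conv_slice c t f φ hx hy, norm_mul]
    simp only
    rw [h3, integral_const_mul, integral_comp_mul_left_Ioi (fun u => ‖cpw c t u * (φ u : ℂ)‖) 0 (inv_pos.mpr hx),
      mul_zero]
    simp only [norm_mul, cpw_norm_pos c t hx, norm_inv, Complex.norm_real, Real.norm_eq_abs,
      abs_of_pos hx, inv_inv, smul_eq_mul]
    field_simp

lemma conv_int {c : ℝ} {f φ : ℝ → ℝ}
    (hf : AEStronglyMeasurable f (volume.restrict (Ioi 0)))
    (hφ : AEStronglyMeasurable φ (volume.restrict (Ioi 0)))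
    (hf1 : MemW1 (c - 1) f) (hφ1 : MemW1 (c - 1) φ) : MemW1 (c - 1) (mconv f φ) := by
  have h := (conv_integrable (t := 0) hf hφ hf1 hφ1).integral_prod_right.norm
  refine IntegrableOn.congr_fun h (fun y hy => ?_) measurableSet_Ioi
  simp only
  rw [integral_const_mul, integral_complex_ofReal, norm_mul, cpw_norm_pos c 0 hy,
    Complex.norm_real, Real.norm_eq_abs, mul_comm]
  rfl

lemma mellinT_mconv {c : ℝ} {f φ : ℝ → ℝ}
    (hf : AEStronglyMeasurable f (volume.restrict (Ioi 0)))
    (hφ : AEStronglyMeasurable φ (volume.restrict (Ioi 0)))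
    (hf1 : MemW1 (c - 1) f) (hφ1 : MemW1 (c - 1) φ) (t : ℝ) :
    mellinT c (mconv f φ) t = mellinT c f t * mellinT c φ t := by
  have h := integral_integral_swap
    (f := fun x y : ℝ => cpw c t y * ((f x * φ (y / x) / x : ℝ) : ℂ))
    (conv_integrable (t := t) hf hφ hf1 hφ1)
  have h1 : mellinT c (mconv f φ) t = ∫ y in Ioi (0:ℝ), ∫ x in Ioi (0:ℝ),
      cpw c t y * ((f x * φ (y / x) / x : ℝ) : ℂ) := by
    unfold mellinT mconv
    refine setIntegral_congr_fun measurableSet_Ioi fun y hy => ?_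
    beta_reduce
    rw [integral_const_mul, integral_complex_ofReal]
  rw [h1, ← h]
  unfold mellinT
  rw [← integral_mul_const]
  refine setIntegral_congr_fun measurableSet_Ioi fun x hx => ?_
  have hx : 0 < x := hx
  have h3 : ∫ y in Ioi (0:ℝ), cpw c t y * ((f x * φ (y / x) / x : ℝ) : ℂ) =
        ∫ y in Ioi (0:ℝ), (cpw c t x * (f x : ℂ) * (x : ℂ)⁻¹) *
          (fun u => cpw c t u * (φ u : ℂ)) (x⁻¹ * y) := by
    refine setIntegral_congr_fun measurableSet_Ioi fun y hy => ?_
    simp only [conv_slice c t f φ hx hy]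
  beta_reduce
  rw [h3, integral_const_mul, integral_comp_mul_left_Ioi (fun u => cpw c t u * (φ u : ℂ)) 0 (inv_pos.mpr hx), mul_zero]
  have hx' : (x : ℂ) ≠ 0 := Complex.ofReal_ne_zero.mpr hx.ne'
  rw [inv_inv, Complex.real_smul]
  field_simp

/-- Measurable and bounded on `[-k,k]`. -/
def BM (k : ℝ) (u : ℝ → ℂ) : Prop := Measurable u ∧ ∃ C : ℝ, ∀ t ∈ Icc (-k) k, ‖u t‖ ≤ C

/-- The symmetric bilinear pairing. -/
def pairing (k : ℝ) (W : ℝ → ℝ) (u v : ℝ → ℂ) : ℂ :=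
  ∫ t in Icc (-k) k, u t * v (-t) * (W t : ℂ)

/-- Weight conditions. -/
def GoodW (k : ℝ) (W : ℝ → ℝ) : Prop :=
  Measurable W ∧ (∀ t, W (-t) = W t) ∧
    ∃ B : ℝ, ∀ᵐ t ∂(volume.restrict (Icc (-k) k)), ‖(W t : ℂ)‖ ≤ B

lemma BM.sub {k : ℝ} {u v : ℝ → ℂ} (hu : BM k u) (hv : BM k v) :
    BM k (fun t => u t - v t) := by
  obtain ⟨hu, C, hC⟩ := hu
  obtain ⟨hv, D, hD⟩ := hv
  exact ⟨hu.sub hv, C + D, fun t ht => (norm_sub_le _ _).trans (add_le_add (hC t ht) (hD t ht))⟩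

lemma BM.neg {k : ℝ} {u : ℝ → ℂ} (hu : BM k u) : BM k (fun t => u (-t)) := by
  obtain ⟨hu, C, hC⟩ := hu
  refine ⟨hu.comp measurable_neg, C, fun t ht => hC _ ⟨?_, ?_⟩⟩ <;> linarith [ht.1, ht.2]

lemma bound_mul {k : ℝ} {W : ℝ → ℝ} (hW : GoodW k W) {u : ℝ → ℂ} (hu : BM k u) :
    Measurable (fun t => u t * (W t : ℂ)) ∧
    ∃ B : ℝ, ∀ᵐ t ∂(volume.restrict (Icc (-k) k)), ‖u t * (W t : ℂ)‖ ≤ B := by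
  obtain ⟨hu, C, hC⟩ := hu
  obtain ⟨hW, -, B, hB⟩ := hW
  refine ⟨hu.mul (Complex.measurable_ofReal.comp hW), C * B, ?_⟩
  filter_upwards [hB, ae_restrict_mem measurableSet_Icc] with t h1 h2
  rw [norm_mul]
  exact mul_le_mul (hC t h2) h1 (norm_nonneg _) ((norm_nonneg _).trans (hC t h2))

lemma pairing_integrable {k : ℝ} {W : ℝ → ℝ} (hW : GoodW k W) {u v : ℝ → ℂ} (hu : BM k u)
    (hv : BM k v) : IntegrableOn (fun t => u t * v (-t) * (W t : ℂ)) (Icc (-k) k) := by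
  obtain ⟨h1, B, hB⟩ := bound_mul hW hv.neg
  obtain ⟨hu, C, hC⟩ := hu
  refine Integrable.of_bound (C := C * B) ?_ ?_
  · simp only [mul_assoc]
    exact (hu.mul h1).aestronglyMeasurable
  · filter_upwards [hB, ae_restrict_mem measurableSet_Icc] with t h1 h2
    rw [mul_assoc, norm_mul]
    exact mul_le_mul (hC t h2) h1 (norm_nonneg _) ((norm_nonneg _).trans (hC t h2))

lemma pairing_comm {k : ℝ} (hk : 0 < k) {W : ℝ → ℝ} (hW : GoodW k W) (u v : ℝ → ℂ) :
    pairing k W u v = pairing k W v u := by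
  unfold pairing
  rw [integral_Icc_eq_integral_Ioc, integral_Icc_eq_integral_Ioc,
    ← intervalIntegral.integral_of_le (by linarith), ← intervalIntegral.integral_of_le (by linarith)]
  have := intervalIntegral.integral_comp_neg (a := -k) (b := k)
    (fun t => v t * u (-t) * (W t : ℂ))
  rw [neg_neg] at this
  rw [← this]
  congr 1
  ext t
  rw [neg_neg, hW.2.1 t, mul_comm (u t)]

lemma pairing_sub_left {k : ℝ} {W : ℝ → ℝ} (hW : GoodW k W) {u v z : ℝ → ℂ} (hu : BM k u)
    (hv : BM k v) (hz : BM k z) :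
    pairing k W (fun t => u t - v t) z = pairing k W u z - pairing k W v z := by
  unfold pairing
  rw [← integral_sub (pairing_integrable hW hu hz) (pairing_integrable hW hv hz)]
  congr 1
  ext t
  ring

lemma pairing_sub_sub {k : ℝ} (hk : 0 < k) {W : ℝ → ℝ} (hW : GoodW k W) {u v z y : ℝ → ℂ}
    (hu : BM k u) (hv : BM k v) (hz : BM k z) (hy : BM k y) :
    pairing k W (fun t => u t - v t) (fun t => z t - y t)
      = pairing k W u z - pairing k W u y - pairing k W v z + pairing k W v y := by
  rw [pairing_sub_left hW hu hv (hz.sub hy), pairing_comm hk hW u, pairing_comm hk hW v,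
    pairing_sub_left hW hz hy hu, pairing_sub_left hW hz hy hv, pairing_comm hk hW z u,
    pairing_comm hk hW y u, pairing_comm hk hW z v, pairing_comm hk hW y v]
  ring

lemma ustat_sum {n : ℕ} (hn : 2 ≤ n) (A : Fin n → Fin n → ℂ) (D : Fin n → ℂ) (M : ℂ) :
    ((n : ℂ) * ((n : ℂ) - 1))⁻¹ *
      ∑ j : Fin n, ∑ l : Fin n, (if j ≠ l then A j l - D j - D l + M else 0)
    = ((n : ℂ) * ((n : ℂ) - 1))⁻¹ * (∑ j : Fin n, ∑ l : Fin n, if j ≠ l then A j l else 0)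
      - 2 * ((n : ℂ)⁻¹ * ∑ j, D j) + M := by
  have hn0 : (n : ℂ) ≠ 0 := by norm_cast; omega
  have hn1 : (n : ℂ) - 1 ≠ 0 := by
    rw [sub_ne_zero]; norm_cast; omega
  have key : ∀ j l : Fin n, (if j ≠ l then A j l - D j - D l + M else 0)
      = (if j ≠ l then A j l else 0) - D j - D l + M - (if j = l then M - 2 * D j else 0) := by
    intro j l
    by_cases h : j = l
    · subst h; simp; ring
    · simp [h]
  simp only [key, Finset.sum_sub_distrib, Finset.sum_add_distrib, Finset.sum_const,
    Finset.sum_ite_eq, Finset.mem_univ, if_true, Finset.card_univ, Fintype.card_fin,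
    ← Finset.mul_sum, nsmul_eq_mul]
  field_simp
  ring

lemma fubini_zero {μ : Measure ℝ} [IsProbabilityMeasure μ] {k : ℝ} {v : ℝ → ℝ → ℂ}
    (hv : Measurable (fun p : ℝ × ℝ => v p.1 p.2)) {b : ℝ → ℝ} (hb : Integrable b μ)
    (hvb : ∀ x, ∀ t ∈ Icc (-k) k, ‖v x t‖ ≤ b x) (h0 : ∀ t, ∫ x, v x t ∂μ = 0)
    {s : ℝ → ℂ} (hs : Measurable s) {B : ℝ}
    (hB : ∀ᵐ t ∂(volume.restrict (Icc (-k) k)), ‖s t‖ ≤ B) :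
    Integrable (fun x => ∫ t in Icc (-k) k, v x t * s t) μ ∧
    ∫ x, (∫ t in Icc (-k) k, v x t * s t) ∂μ = 0 := by
  have hI : Integrable (fun p : ℝ × ℝ => v p.1 p.2 * s p.2)
      (μ.prod (volume.restrict (Icc (-k) k))) := by
    have h1 : Integrable (fun p : ℝ × ℝ => b p.1 * B)
        (μ.prod (volume.restrict (Icc (-k) k))) := hb.mul_prod (integrable_const B)
    refine h1.mono' (hv.mul (hs.comp measurable_snd)).aestronglyMeasurable ?_
    have h2 := (Measure.quasiMeasurePreserving_snd (μ := μ)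
      (ν := volume.restrict (Icc (-k) k))).ae (hB.and (ae_restrict_mem measurableSet_Icc))
    filter_upwards [h2] with p hp
    rw [norm_mul]
    have := hvb p.1 p.2 hp.2
    exact mul_le_mul this hp.1 (norm_nonneg _) ((norm_nonneg _).trans this)
  refine ⟨hI.integral_prod_left, ?_⟩
  rw [integral_integral_swap (f := fun x t => v x t * s t) hI]
  simp [integral_mul_const, h0]

lemma kernel_integrable {μ : Measure ℝ} [IsProbabilityMeasure μ] {k : ℝ} {v : ℝ → ℝ → ℂ}
    (hv : Measurable (fun p : ℝ × ℝ => v p.1 p.2)) {b : ℝ → ℝ} (hb : Integrable b μ)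
    (hvb : ∀ x, ∀ t ∈ Icc (-k) k, ‖v x t‖ ≤ b x) {W : ℝ → ℝ} (hW : GoodW k W) :
    Integrable (fun p : ℝ × ℝ => pairing k W (v p.1) (v p.2)) (μ.prod μ) := by
  obtain ⟨hWm, -, B, hB⟩ := hW
  have hI : Integrable (fun q : (ℝ × ℝ) × ℝ => v q.1.1 q.2 * v q.1.2 (-q.2) * (W q.2 : ℂ))
      ((μ.prod μ).prod (volume.restrict (Icc (-k) k))) := by
    have h1 : Integrable (fun q : (ℝ × ℝ) × ℝ => (b q.1.1 * b q.1.2) * B)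
        ((μ.prod μ).prod (volume.restrict (Icc (-k) k))) :=
      (hb.mul_prod hb).mul_prod (integrable_const B)
    have m1 : Measurable (fun q : (ℝ × ℝ) × ℝ => v q.1.1 q.2) :=
      hv.comp (measurable_fst.fst.prodMk measurable_snd)
    have m2 : Measurable (fun q : (ℝ × ℝ) × ℝ => v q.1.2 (-q.2)) :=
      hv.comp (measurable_fst.snd.prodMk measurable_snd.neg)
    have m3 : Measurable (fun q : (ℝ × ℝ) × ℝ => (W q.2 : ℂ)) :=
      Complex.measurable_ofReal.comp (hWm.comp measurable_snd)
    refine h1.mono' ((m1.mul m2).mul m3).aestronglyMeasurable ?_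
    have h2 := (Measure.quasiMeasurePreserving_snd (μ := μ.prod μ)
      (ν := volume.restrict (Icc (-k) k))).ae (hB.and (ae_restrict_mem measurableSet_Icc))
    filter_upwards [h2] with q hq
    rw [norm_mul, norm_mul]
    have a1 := hvb q.1.1 q.2 hq.2
    have a2 := hvb q.1.2 (-q.2) ⟨by linarith [hq.2.2], by linarith [hq.2.1]⟩
    have n1 := (norm_nonneg _).trans a1
    have n2 := (norm_nonneg _).trans a2
    exact mul_le_mul (mul_le_mul a1 a2 (norm_nonneg _) n1) hq.1 (norm_nonneg _)
      (mul_nonneg n1 n2)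
  exact hI.integral_prod_left

lemma kernel_left {μ : Measure ℝ} [IsProbabilityMeasure μ] {k : ℝ} {v : ℝ → ℝ → ℂ}
    (hv : Measurable (fun p : ℝ × ℝ => v p.1 p.2)) {b : ℝ → ℝ} (hb : Integrable b μ)
    (hvb : ∀ x, ∀ t ∈ Icc (-k) k, ‖v x t‖ ≤ b x) (h0 : ∀ t, ∫ x, v x t ∂μ = 0)
    {W : ℝ → ℝ} (hW : GoodW k W) {u : ℝ → ℂ} (hu : BM k u) :
    Integrable (fun x => pairing k W (v x) u) μ ∧ ∫ x, pairing k W (v x) u ∂μ = 0 := by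
  obtain ⟨h1, B, hB⟩ := bound_mul hW hu.neg
  have := fubini_zero hv hb hvb h0 h1 hB
  simpa only [pairing, mul_assoc] using this

lemma wgt_good {c k : ℝ} {w φ : ℝ → ℝ} (hw : Measurable w) (hw0 : ∀ t, 0 ≤ w t)
    (hws : ∀ t, w (-t) = w t)
    (hφ : Continuous (mellinT c φ)) (hwinf : winf c k w φ ≠ ⊤) : GoodW k (wgt c w φ) := by
  refine ⟨?_, ?_, (winf c k w φ).toReal ^ 2, ?_⟩
  · unfold wgt
    exact (hw.pow_const 2).div (hφ.measurable.norm.pow_const 2)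
  · intro t
    simp [wgt, hws, mellinT_neg]
  · have h : ∀ᵐ t, ENNReal.ofReal ((Icc (-k) k).indicator
        (fun t => w t / ‖mellinT c φ t‖) t) ≤ winf c k w φ := ENNReal.ae_le_essSup _
    filter_upwards [ae_restrict_of_ae h, ae_restrict_mem measurableSet_Icc] with t h1 h2
    rw [indicator_of_mem h2, ENNReal.ofReal_le_iff_le_toReal hwinf] at h1
    have h3 : 0 ≤ w t / ‖mellinT c φ t‖ := div_nonneg (hw0 t) (norm_nonneg _)
    rw [Complex.norm_real, Real.norm_eq_abs, wgt, ← div_pow, abs_of_nonneg (by positivity)]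
    exact pow_le_pow_left₀ h3 h1 2

lemma mconv_nonneg {f φ : ℝ → ℝ} (hf : ∀ x, 0 ≤ f x) (hφ : ∀ x, 0 ≤ φ x) (y : ℝ) :
    0 ≤ mconv f φ y :=
  setIntegral_nonneg measurableSet_Ioi fun x hx =>
    div_nonneg (mul_nonneg (hf x) (hφ _)) (le_of_lt hx)

lemma mconv_zero {f φ : ℝ → ℝ} (hφ : ∀ x ≤ (0 : ℝ), φ x = 0) {y : ℝ} (hy : y ≤ 0) :
    mconv f φ y = 0 := by
  unfold mconv
  rw [setIntegral_congr_fun (g := fun _ => 0) measurableSet_Ioi]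
  · simp
  · intro x hx
    have : y / x ≤ 0 := div_nonpos_of_nonpos_of_nonneg hy (le_of_lt hx)
    simp [hφ _ this]

/-- The law with density `g`. -/
def lawOf (g : ℝ → ℝ) : Measure ℝ :=
  (volume : Measure ℝ).withDensity (fun y => ENNReal.ofReal (g y))

lemma aemeas_of {g : ℝ → ℝ} (hm : AEStronglyMeasurable g (volume.restrict (Ioi 0)))
    (hz : ∀ y ≤ (0 : ℝ), g y = 0) : AEStronglyMeasurable g volume := by
  have h := (aestronglyMeasurable_indicator_iff (measurableSet_Ioi (a := (0 : ℝ)))).mpr hm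
  have e : (Ioi (0 : ℝ)).indicator g = g := by
    ext y
    by_cases hy : y ∈ Ioi (0 : ℝ)
    · simp [hy]
    · rw [indicator_of_notMem hy, hz y (not_lt.mp hy)]
  rwa [e] at h

lemma lawOf_integral {g : ℝ → ℝ} (hm : AEStronglyMeasurable g (volume.restrict (Ioi 0)))
    (hz : ∀ y ≤ (0 : ℝ), g y = 0) (h0 : ∀ y, 0 ≤ g y) (F : ℝ → ℂ) :
    ∫ x, F x ∂(lawOf g) = ∫ x in Ioi (0 : ℝ), F x * (g x : ℂ) := by
  unfold lawOf
  rw [integral_withDensity_eq_integral_toReal_smul₀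
    (aemeas_of hm hz).aemeasurable.ennreal_ofReal (by simp)]
  rw [setIntegral_eq_integral_of_forall_compl_eq_zero]
  · congr 1
    ext x
    rw [ENNReal.toReal_ofReal (h0 x), Complex.real_smul, mul_comm]
  · intro x hx
    simp [hz x (not_lt.mp hx)]

lemma lawOf_integrable {g : ℝ → ℝ} (hm : AEStronglyMeasurable g (volume.restrict (Ioi 0)))
    (hz : ∀ y ≤ (0 : ℝ), g y = 0) (h0 : ∀ y, 0 ≤ g y) {c : ℝ} (h1 : MemW1 (c - 1) g) :
    Integrable (fun x : ℝ => |x| ^ (c - 1)) (lawOf g) := by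
  unfold lawOf
  rw [integrable_withDensity_iff_integrable_smul₀'
    (aemeas_of hm hz).aemeasurable.ennreal_ofReal (by simp)]
  have h2 : Integrable ((Ioi (0 : ℝ)).indicator (fun x => |g x| * x ^ (c - 1))) :=
    (integrable_indicator_iff measurableSet_Ioi).mpr h1
  refine h2.congr (Eventually.of_forall fun x => ?_)
  by_cases hx : x ∈ Ioi (0 : ℝ)
  · have hx' : 0 < x := hx
    simp only [indicator_of_mem hx, abs_of_nonneg (h0 x), ENNReal.toReal_ofReal (h0 x),
      abs_of_pos hx', smul_eq_mul]
  · simp [indicator_of_notMem hx, hz x (not_lt.mp hx)]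

lemma mellin_one_zero (g : ℝ → ℝ) :
    mellinT 1 g 0 = ((∫ x in Ioi (0 : ℝ), g x : ℝ) : ℂ) := by
  unfold mellinT cpw
  simp [integral_complex_ofReal]

lemma memW1_zero {h : ℝ → ℝ} (hi : IntegrableOn h (Ioi 0)) : MemW1 ((1 : ℝ) - 1) h := by
  unfold MemW1
  simp only [sub_self, Real.rpow_zero, mul_one]
  exact hi.abs

lemma cpw_BM (c k y : ℝ) : BM k (fun t => cpw c t y) :=
  ⟨(cpw_measurable c).comp (measurable_id.prodMk measurable_const), _,
    fun t ht => cpw_norm_le c k t y ht⟩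

lemma mellinT_sub {c : ℝ} {f g : ℝ → ℝ}
    (hf : AEStronglyMeasurable f (volume.restrict (Ioi 0)))
    (hg : AEStronglyMeasurable g (volume.restrict (Ioi 0)))
    (hf1 : MemW1 (c - 1) f) (hg1 : MemW1 (c - 1) g) (t : ℝ) :
    mellinT c (fun x => f x - g x) t = mellinT c f t - mellinT c g t := by
  unfold mellinT
  rw [← integral_sub (cpw_integrable hf hf1 t) (cpw_integrable hg hg1 t)]
  congr 1
  ext x
  push_cast
  ring

/-- `q_k²` as a pairing. -/
lemma qk2_pairing {c k : ℝ} {w φ h : ℝ → ℝ} {u : ℝ → ℂ} (hMφ : ∀ t, mellinT c φ t ≠ 0)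
    (hu : ∀ t, u t = mellinT c h t * mellinT c φ t) :
    ((qk2 c k w h : ℝ) : ℂ) = pairing k (wgt c w φ) u u := by
  unfold qk2 pairing
  rw [← integral_complex_ofReal]
  congr 1
  ext t
  have h1 : u (-t) = (starRingEnd ℂ) (u t) := by simp [hu, mellinT_neg]
  rw [h1, Complex.mul_conj, Complex.normSq_eq_norm_sq, ← Complex.ofReal_mul, hu, norm_mul, wgt]
  have := norm_ne_zero_iff.mpr (hMφ t)
  congr 1
  field_simp

lemma pair_integral {Ω : Type*} [MeasurableSpace Ω] {P : Measure Ω} [IsProbabilityMeasure P]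
    {X Z : Ω → ℝ} {μ : Measure ℝ} [IsProbabilityMeasure μ] (hX : Measurable X) (hZ : Measurable Z)
    (hXμ : Measure.map X P = μ) (hZμ : Measure.map Z P = μ)
    (hi : ProbabilityTheory.IndepFun X Z P) {H : ℝ × ℝ → ℂ} (hH : Integrable H (μ.prod μ)) :
    Integrable (fun ω => H (X ω, Z ω)) P ∧ ∫ ω, H (X ω, Z ω) ∂P = ∫ p, H p ∂(μ.prod μ) := by
  have h := (ProbabilityTheory.indepFun_iff_map_prod_eq_prod_map_map
    hX.aemeasurable hZ.aemeasurable).mp hi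
  rw [hXμ, hZμ] at h
  have hm : Measurable (fun ω => (X ω, Z ω)) := hX.prodMk hZ
  rw [← h] at hH ⊢
  refine ⟨hH.comp_measurable hm, ?_⟩
  rw [integral_map hm.aemeasurable hH.aestronglyMeasurable]

/-- decomposition (15): unbiasedness and decomposition of the test
statistic: `E[q̂_k²] = q_k²(f-f₀)` and `q̂_k² = U_k + 2W_k + q_k²(f-f₀)`, where `U_k` is a
canonical (degenerate) U-statistic and `W_k` is a centred linear statistic. -/
theorem test_statistic_unbiased_and_decomposition
    {Ω : Type*} [MeasurableSpace Ω] (P : Measure Ω) [IsProbabilityMeasure P]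
    (c : ℝ) (w φ f f₀ : ℝ → ℝ)
    (hw : IsSymmDensity w) (hφ : regD c φ) (hf : regD c f) (hf₀ : regD c f₀)
    (hMφ : ∀ t, mellinT c φ t ≠ 0)
    (hwinf : ∀ k : ℝ, 0 < k → winf c k w φ ≠ ⊤)
    (k : ℝ) (hk : 0 < k) (n : ℕ) (hn : 2 ≤ n)
    (Y : Fin n → Ω → ℝ) (hY : IID P Y (mconv f φ)) :
    -- (a) unbiasedness
    (∫ ω, qhat c k w φ f₀ Y ω ∂P) = qk2 c k w (fun x => f x - f₀ x) ∧
    -- (b) decomposition q̂_k² = U_k + 2W_k + q_k²(f-f₀)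
    (∀ ω : Ω, qhat c k w φ f₀ Y ω
        = (Ustat (hkfull c k w φ (mconv f φ)) Y ω).re
          + 2 * (Wstat c k w φ (mconv f φ) (mconv f₀ φ) Y ω).re
          + qk2 c k w (fun x => f x - f₀ x)) ∧
    -- U_k is canonical: E[h_k(Y, y)] = 0 for every y
    (∀ y : ℝ,
      (∫ x in Ioi (0 : ℝ), hkfull c k w φ (mconv f φ) x y * ((mconv f φ) x : ℂ)) = 0 ∧
      (∫ x in Ioi (0 : ℝ), hkfull c k w φ (mconv f φ) y x * ((mconv f φ) x : ℂ)) = 0) ∧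
    -- W_k is centred
    (∫ ω, (Wstat c k w φ (mconv f φ) (mconv f₀ φ) Y ω).re ∂P) = 0 := by
  obtain ⟨hwm, hw0, hws, -, -⟩ := hw
  obtain ⟨⟨φ0, φz, φi, φ1⟩, φw, -⟩ := hφ
  obtain ⟨⟨f0, fz, fi, f1⟩, fw, -⟩ := hf
  obtain ⟨⟨g0, gz, gi, g1⟩, gw, -⟩ := hf₀
  have φm := φi.aestronglyMeasurable
  have fm := fi.aestronglyMeasurable
  have gm := gi.aestronglyMeasurable
  have hW : GoodW k (wgt c w φ) := wgt_good hwm hw0 hws (mellinT_continuous φm φw) (hwinf k hk)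
  have Mm := mellinT_mconv fm φm fw φw
  have Mm0 := mellinT_mconv gm φm gw φw
  have cm := mconv_aesm fm φm
  have cw := conv_int fm φm fw φw
  have cn := mconv_nonneg f0 φ0
  have cz : ∀ y ≤ (0 : ℝ), mconv f φ y = 0 := fun y hy => mconv_zero φz hy
  have ctot : ((∫ x in Ioi (0 : ℝ), mconv f φ x : ℝ) : ℂ) = 1 := by
    rw [← mellin_one_zero, mellinT_mconv fm φm (memW1_zero fi) (memW1_zero φi), mellin_one_zero,
      mellin_one_zero, f1, φ1]
    simp
  -- bounded measurable functions
  have hm : BM k (mellinT c (mconv f φ)) :=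
    ⟨(mellinT_continuous cm cw).measurable, _, fun t _ => mellinT_norm_le t⟩
  have hm0 : BM k (mellinT c (mconv f₀ φ)) :=
    ⟨(mellinT_continuous (mconv_aesm gm φm) (conv_int gm φm gw φw)).measurable, _,
      fun t _ => mellinT_norm_le t⟩
  -- the law of the observations
  obtain ⟨hind, hlaw⟩ := hY
  have hlaw' : ∀ j, Measure.map (Y j) P = lawOf (mconv f φ) := fun j => (hlaw j).2
  have hYm : ∀ j, Measurable (Y j) := fun j => (hlaw j).1
  have : IsProbabilityMeasure (lawOf (mconv f φ)) := by
    rw [← hlaw' ⟨0, by omega⟩]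
    exact Measure.isProbabilityMeasure_map (hYm _).aemeasurable
  have hint := lawOf_integral cm cz cn
  set μ := lawOf (mconv f φ) with hμ
  -- the centred power
  have hv : Measurable (fun p : ℝ × ℝ => vtil c (mconv f φ) p.1 p.2) :=
    ((cpw_measurable c).comp measurable_swap).sub (hm.1.comp measurable_snd)
  have hb : Integrable (fun x : ℝ => |x| ^ (c - 1) * Real.exp (Real.pi * (2 * Real.pi * k))
      + wnorm1 (c - 1) (mconv f φ)) μ :=
    ((lawOf_integrable cm cz cn cw).mul_const _).add (integrable_const _)
  have hvb : ∀ x, ∀ t ∈ Icc (-k) k, ‖vtil c (mconv f φ) x t‖ ≤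
      |x| ^ (c - 1) * Real.exp (Real.pi * (2 * Real.pi * k)) + wnorm1 (c - 1) (mconv f φ) :=
    fun x t ht => (norm_sub_le _ _).trans
      (add_le_add (cpw_norm_le c k t x ht) (mellinT_norm_le t))
  have h0 : ∀ t, ∫ x, vtil c (mconv f φ) x t ∂μ = 0 := by
    intro t
    rw [hint]
    have h1 := cpw_integrable cm cw t
    have h2 : IntegrableOn (fun x => mellinT c (mconv f φ) t * ((mconv f φ x : ℝ) : ℂ)) (Ioi 0) := by
      have h3 := conv_int fm φm (memW1_zero fi) (memW1_zero φi)
      have h4 := cpw_integrable cm h3 0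
      simp only [cpw, Complex.ofReal_one, sub_self, Complex.ofReal_zero, mul_zero, add_zero,
        Complex.cpow_zero, one_mul] at h4
      exact Integrable.const_mul h4 _
    simp only [vtil, sub_mul]
    rw [integral_sub h1 h2, integral_const_mul, integral_complex_ofReal, ctot, mul_one]
    exact sub_self _
  have hvBM : ∀ y, BM k (vtil c (mconv f φ) y) := fun y => (cpw_BM c k y).sub hm
  have canL : ∀ y, ∫ x, hkfull c k w φ (mconv f φ) x y ∂μ = 0 := fun y =>
    (kernel_left hv hb hvb h0 hW (hvBM y)).2
  have hsymm : ∀ x y, hkfull c k w φ (mconv f φ) x y = hkfull c k w φ (mconv f φ) y x :=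
    fun x y => pairing_comm hk hW _ _
  -- degenerate kernel under the product law
  have hK : Integrable (fun p : ℝ × ℝ => hkfull c k w φ (mconv f φ) p.1 p.2) (μ.prod μ) :=
    kernel_integrable hv hb hvb hW
  have hK0 : ∫ p, hkfull c k w φ (mconv f φ) p.1 p.2 ∂(μ.prod μ) = 0 := by
    rw [integral_prod _ hK]
    have hr : ∀ x, ∫ y, hkfull c k w φ (mconv f φ) x y ∂μ = 0 := fun x =>
      (integral_congr_ae (Eventually.of_forall fun y => hsymm x y)).trans (canL x)
    simp only [hr, integral_zero]
  have hpair : ∀ j l, j ≠ l → Integrable (fun ω => hkfull c k w φ (mconv f φ) (Y j ω) (Y l ω)) P ∧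
      ∫ ω, hkfull c k w φ (mconv f φ) (Y j ω) (Y l ω) ∂P = 0 := by
    intro j l hjl
    have := pair_integral (hYm j) (hYm l) (hlaw' j) (hlaw' l) (hind.indepFun hjl) hK
    exact ⟨this.1, this.2.trans hK0⟩
  have hUterm : ∀ j l, Integrable
      (fun ω => if j ≠ l then hkfull c k w φ (mconv f φ) (Y j ω) (Y l ω) else 0) P ∧
      ∫ ω, (if j ≠ l then hkfull c k w φ (mconv f φ) (Y j ω) (Y l ω) else 0) ∂P = 0 := by
    intro j l
    by_cases h : j = l
    · simp [h]
    · simpa [h] using hpair j l h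
  have hUi : Integrable (Ustat (hkfull c k w φ (mconv f φ)) Y) P :=
    (integrable_finsetSum _ fun j _ => integrable_finsetSum _ fun l _ => (hUterm j l).1).const_mul _
  have hU0 : ∫ ω, Ustat (hkfull c k w φ (mconv f φ)) Y ω ∂P = 0 := by
    unfold Ustat
    rw [integral_const_mul, integral_finsetSum _
      fun j _ => integrable_finsetSum _ fun l _ => (hUterm j l).1]
    rw [Finset.sum_eq_zero, mul_zero]
    intro j _
    rw [integral_finsetSum _ fun l _ => (hUterm j l).1]
    exact Finset.sum_eq_zero fun l _ => (hUterm j l).2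
  -- the linear statistic
  have hd := hm.sub hm0
  have hconj : ∀ t, (starRingEnd ℂ) (mellinT c (mconv f φ) t - mellinT c (mconv f₀ φ) t)
      = mellinT c (mconv f φ) (-t) - mellinT c (mconv f₀ φ) (-t) := by
    intro t; simp [mellinT_neg]
  have hWeq : ∀ ω, Wstat c k w φ (mconv f φ) (mconv f₀ φ) Y ω = (n : ℂ)⁻¹ * ∑ j : Fin n,
      pairing k (wgt c w φ) (vtil c (mconv f φ) (Y j ω))
        (fun t => mellinT c (mconv f φ) t - mellinT c (mconv f₀ φ) t) := by
    intro ω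
    simp only [Wstat, hconj, pairing]
  obtain ⟨hL1, hL2⟩ := kernel_left hv hb hvb h0 hW hd
  have hWterm : ∀ j, Integrable (fun ω => pairing k (wgt c w φ) (vtil c (mconv f φ) (Y j ω))
        (fun t => mellinT c (mconv f φ) t - mellinT c (mconv f₀ φ) t)) P ∧
      ∫ ω, pairing k (wgt c w φ) (vtil c (mconv f φ) (Y j ω))
        (fun t => mellinT c (mconv f φ) t - mellinT c (mconv f₀ φ) t) ∂P = 0 := by
    intro j
    rw [← hlaw' j] at hL1 hL2
    refine ⟨hL1.comp_measurable (hYm j), ?_⟩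
    rw [integral_map (hYm j).aemeasurable hL1.aestronglyMeasurable] at hL2
    exact hL2
  have hWi : Integrable (Wstat c k w φ (mconv f φ) (mconv f₀ φ) Y) P := by
    rw [funext hWeq]
    exact (integrable_finsetSum _ fun j _ => (hWterm j).1).const_mul _
  have hW0 : ∫ ω, Wstat c k w φ (mconv f φ) (mconv f₀ φ) Y ω ∂P = 0 := by
    simp only [hWeq]
    rw [integral_const_mul, integral_finsetSum _ fun j _ => (hWterm j).1,
      Finset.sum_eq_zero (fun j _ => (hWterm j).2), mul_zero]
  have hU0r : ∫ ω, (Ustat (hkfull c k w φ (mconv f φ)) Y ω).re ∂P = 0 := by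
    have := integral_re hUi
    simpa [hU0] using this
  have hW0r : ∫ ω, (Wstat c k w φ (mconv f φ) (mconv f₀ φ) Y ω).re ∂P = 0 := by
    have := integral_re hWi
    simpa [hW0] using this
  -- the decomposition
  have hdec : ∀ ω : Ω, qhat c k w φ f₀ Y ω
        = (Ustat (hkfull c k w φ (mconv f φ)) Y ω).re
          + 2 * (Wstat c k w φ (mconv f φ) (mconv f₀ φ) Y ω).re
          + qk2 c k w (fun x => f x - f₀ x) := by
    intro ω
    have hn0 : (n : ℂ) ≠ 0 := by norm_cast; omega
    have q0 := qk2_pairing (k := k) (w := w) hMφ Mm0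
    have q1 : ((qk2 c k w (fun x => f x - f₀ x) : ℝ) : ℂ) = pairing k (wgt c w φ)
        (fun t => mellinT c (mconv f φ) t - mellinT c (mconv f₀ φ) t)
        (fun t => mellinT c (mconv f φ) t - mellinT c (mconv f₀ φ) t) := by
      refine qk2_pairing hMφ fun t => ?_
      rw [mellinT_sub fm gm fw gw, Mm, Mm0, sub_mul]
    rw [pairing_sub_sub hk hW hm hm0 hm hm0,
      pairing_comm hk hW (mellinT c (mconv f₀ φ)) (mellinT c (mconv f φ))] at q1
    have hS : Shat c k w φ f₀ Y ω = (n : ℂ)⁻¹ * ∑ j : Fin n,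
        pairing k (wgt c w φ) (fun t => cpw c t (Y j ω)) (mellinT c (mconv f₀ φ)) := by
      simp only [Shat, pairing, mellinT_neg]
    have hUd : Ustat (hkfull c k w φ (mconv f φ)) Y ω = That c k w φ Y ω
        - 2 * ((n : ℂ)⁻¹ * ∑ j : Fin n,
            pairing k (wgt c w φ) (fun t => cpw c t (Y j ω)) (mellinT c (mconv f φ)))
        + pairing k (wgt c w φ) (mellinT c (mconv f φ)) (mellinT c (mconv f φ)) := by
      have hh : ∀ j l, hkfull c k w φ (mconv f φ) (Y j ω) (Y l ω)
          = pairing k (wgt c w φ) (fun t => cpw c t (Y j ω)) (fun t => cpw c t (Y l ω))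
            - pairing k (wgt c w φ) (fun t => cpw c t (Y j ω)) (mellinT c (mconv f φ))
            - pairing k (wgt c w φ) (fun t => cpw c t (Y l ω)) (mellinT c (mconv f φ))
            + pairing k (wgt c w φ) (mellinT c (mconv f φ)) (mellinT c (mconv f φ)) := by
        intro j l
        rw [pairing_comm hk hW (fun t => cpw c t (Y l ω)) (mellinT c (mconv f φ))]
        exact pairing_sub_sub hk hW (cpw_BM c k _) hm (cpw_BM c k _) hm
      unfold Ustat
      simp only [hh]
      exact ustat_sum hn _ _ _
    have hWd : Wstat c k w φ (mconv f φ) (mconv f₀ φ) Y ω = (n : ℂ)⁻¹ * (∑ j : Fin n,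
            pairing k (wgt c w φ) (fun t => cpw c t (Y j ω)) (mellinT c (mconv f φ)))
        - Shat c k w φ f₀ Y ω
        - pairing k (wgt c w φ) (mellinT c (mconv f φ)) (mellinT c (mconv f φ))
        + pairing k (wgt c w φ) (mellinT c (mconv f φ)) (mellinT c (mconv f₀ φ)) := by
      have hh : ∀ j, pairing k (wgt c w φ) (vtil c (mconv f φ) (Y j ω))
          (fun t => mellinT c (mconv f φ) t - mellinT c (mconv f₀ φ) t)
          = pairing k (wgt c w φ) (fun t => cpw c t (Y j ω)) (mellinT c (mconv f φ))
            - pairing k (wgt c w φ) (fun t => cpw c t (Y j ω)) (mellinT c (mconv f₀ φ))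
            - pairing k (wgt c w φ) (mellinT c (mconv f φ)) (mellinT c (mconv f φ))
            + pairing k (wgt c w φ) (mellinT c (mconv f φ)) (mellinT c (mconv f₀ φ)) :=
        fun j => pairing_sub_sub hk hW (cpw_BM c k _) hm hm hm0
      rw [hWeq, hS]
      simp only [hh, Finset.sum_sub_distrib, Finset.sum_add_distrib, Finset.sum_const,
        Finset.card_univ, Fintype.card_fin, nsmul_eq_mul]
      field_simp
    have e : That c k w φ Y ω - 2 * Shat c k w φ f₀ Y ω + ((qk2 c k w f₀ : ℝ) : ℂ)
        = Ustat (hkfull c k w φ (mconv f φ)) Y ω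
          + 2 * Wstat c k w φ (mconv f φ) (mconv f₀ φ) Y ω
          + ((qk2 c k w (fun x => f x - f₀ x) : ℝ) : ℂ) := by
      rw [hUd, hWd, q0, q1]
      ring
    have e2 := congrArg Complex.re e
    simp only [Complex.add_re, Complex.ofReal_re] at e2
    rw [qhat, e2]
    simp
  refine ⟨?_, hdec, ?_, hW0r⟩
  · simp only [hdec]
    have i1 : Integrable (fun ω => (Ustat (hkfull c k w φ (mconv f φ)) Y ω).re) P := hUi.re
    have i2 : Integrable (fun ω => 2 * (Wstat c k w φ (mconv f φ) (mconv f₀ φ) Y ω).re) P :=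
      hWi.re.const_mul 2
    have i3 : Integrable (fun ω => (Ustat (hkfull c k w φ (mconv f φ)) Y ω).re
        + 2 * (Wstat c k w φ (mconv f φ) (mconv f₀ φ) Y ω).re) P := i1.add i2
    rw [integral_add i3 (integrable_const _), integral_add i1 i2, integral_const_mul,
      hU0r, hW0r]
    simp
  · intro y
    have h1 : ∫ x in Ioi (0 : ℝ), hkfull c k w φ (mconv f φ) x y * ((mconv f φ) x : ℂ) = 0 := by
      rw [← hint]; exact canL y
    refine ⟨h1, ?_⟩
    simp only [hsymm y]
    exact h1

end MultErr
end
end
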